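/- Non-conforming minorant for the solenoidal part: let ṽ ∈ L²(Ω;ℝ^N), set E := ∇û − A^{−1}ṽ, and let E = g + A^{−1}ψ with g ∈ 𝒢, ψ ∈ D₀ be its Helmholtz decomposition. Then for every v ∈ D₀ and every u ∈ L²₋₁(Ω) with weak gradient ∇u ∈ L²(Ω;ℝ^N) such that û − u ∈ H¹°₋₁(Ω), ‖A^{−1}ψ‖²_A ≥ M̃₋(A^{−1}ṽ, A^{−1}v, ∇u) := ∫_Ω (2∇u − A^{−1}(2ṽ + v))·v dx. -/

import Mathlib

open MeasureTheory Filter Topology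
open scoped RealInnerProductSpace

noncomputable section

/-- Euclidean space `ℝ^N`. -/
abbrev Euc (N : ℕ) := EuclideanSpace ℝ (Fin N)

/-- The Poincaré constant `c_N = 2/(N-2)`. -/
def cN (N : ℕ) : ℝ := 2 / ((N : ℝ) - 2)

variable {N : ℕ}

/-- Squared weighted `L²_s(Ω)` norm: `∫_Ω (1+|x|²)^s u(x)² dx`. -/
def sqL2 (Ω : Set (Euc N)) (s : ℝ) (u : Euc N → ℝ) : ℝ :=
  ∫ x in Ω, (1 + ‖x‖ ^ 2) ^ s * u x ^ 2

/-- Weighted `L²_s(Ω)` norm. -/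
def nrmL2 (Ω : Set (Euc N)) (s : ℝ) (u : Euc N → ℝ) : ℝ :=
  Real.sqrt (sqL2 Ω s u)

/-- Membership in the weighted space `L²_s(Ω)` (scalar functions). -/
def MemL2 (Ω : Set (Euc N)) (s : ℝ) (u : Euc N → ℝ) : Prop :=
  AEStronglyMeasurable u (volume.restrict Ω) ∧
    Integrable (fun x => (1 + ‖x‖ ^ 2) ^ s * u x ^ 2) (volume.restrict Ω)

/-- Squared weighted `L²_s(Ω;ℝ^N)` norm for vector fields. -/
def sqL2V (Ω : Set (Euc N)) (s : ℝ) (v : Euc N → Euc N) : ℝ :=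
  ∫ x in Ω, (1 + ‖x‖ ^ 2) ^ s * ‖v x‖ ^ 2

/-- Weighted `L²_s(Ω;ℝ^N)` norm for vector fields. -/
def nrmL2V (Ω : Set (Euc N)) (s : ℝ) (v : Euc N → Euc N) : ℝ :=
  Real.sqrt (sqL2V Ω s v)

/-- Membership in the weighted space `L²_s(Ω;ℝ^N)` (vector fields). -/
def MemL2V (Ω : Set (Euc N)) (s : ℝ) (v : Euc N → Euc N) : Prop :=
  AEStronglyMeasurable v (volume.restrict Ω) ∧
    Integrable (fun x => (1 + ‖x‖ ^ 2) ^ s * ‖v x‖ ^ 2) (volume.restrict Ω)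

/-- Test functions: `φ ∈ C_c^∞(Ω)`. -/
def IsTest (Ω : Set (Euc N)) (φ : Euc N → ℝ) : Prop :=
  ContDiff ℝ (⊤ : ℕ∞) φ ∧ HasCompactSupport φ ∧ tsupport φ ⊆ Ω

/-- `g` is the weak gradient of `u` on `Ω`:
`∫_Ω u ∇φ = −∫_Ω φ g` for all test functions `φ`. -/
def IsWeakGrad (Ω : Set (Euc N)) (u : Euc N → ℝ) (g : Euc N → Euc N) : Prop :=
  ∀ φ : Euc N → ℝ, IsTest Ω φ →
    (∫ x in Ω, u x • gradient φ x) = - ∫ x in Ω, φ x • g x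

/-- `d` is the weak divergence of the vector field `v` on `Ω`:
`∫_Ω v·∇φ = −∫_Ω d φ` for all test functions `φ`. -/
def IsWeakDiv (Ω : Set (Euc N)) (v : Euc N → Euc N) (d : Euc N → ℝ) : Prop :=
  ∀ φ : Euc N → ℝ, IsTest Ω φ →
    (∫ x in Ω, ⟪v x, gradient φ x⟫) = - ∫ x in Ω, d x * φ x

/-- `u ∈ H¹°₋₁(Ω)` with weak gradient `g`: `u ∈ L²₋₁(Ω)`, `g ∈ L²(Ω;ℝ^N)` is the weak
gradient of `u`, and `u` is approximated by test functions in the natural norms. -/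
def MemH10 (Ω : Set (Euc N)) (u : Euc N → ℝ) (g : Euc N → Euc N) : Prop :=
  MemL2 Ω (-1) u ∧ MemL2V Ω 0 g ∧ IsWeakGrad Ω u g ∧
    ∃ φ : ℕ → Euc N → ℝ, (∀ n, IsTest Ω (φ n)) ∧
      Tendsto (fun n => nrmL2 Ω (-1) (fun x => u x - φ n x)) atTop (𝓝 0) ∧
      Tendsto (fun n => nrmL2V Ω 0 (fun x => g x - gradient (φ n) x)) atTop (𝓝 0)

/-- `g ∈ 𝒢`, the closure in `L²(Ω;ℝ^N)` of `{∇φ : φ ∈ C_c^∞(Ω)}`. -/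
def MemG (Ω : Set (Euc N)) (g : Euc N → Euc N) : Prop :=
  MemL2V Ω 0 g ∧
    ∃ φ : ℕ → Euc N → ℝ, (∀ n, IsTest Ω (φ n)) ∧
      Tendsto (fun n => nrmL2V Ω 0 (fun x => g x - gradient (φ n) x)) atTop (𝓝 0)

/-- `ψ ∈ D₀`, the set of weakly divergence-free fields in `L²(Ω;ℝ^N)`. -/
def MemD0 (Ω : Set (Euc N)) (ψ : Euc N → Euc N) : Prop :=
  MemL2V Ω 0 ψ ∧
    ∀ φ : Euc N → ℝ, IsTest Ω φ → (∫ x in Ω, ⟪ψ x, gradient φ x⟫) = 0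

/-- The coefficient matrix field `A : Ω → ℝ^{N×N}`: measurable, essentially bounded,
symmetric, and uniformly coercive (`A(x)ξ·ξ ≥ α⁻²|ξ|²` for a.e. `x ∈ Ω`). -/
structure Coeff (N : ℕ) (Ω : Set (Euc N)) where
  A : Euc N → Euc N →L[ℝ] Euc N
  α : ℝ
  α_pos : 0 < α
  meas : ∀ ξ : Euc N, AEStronglyMeasurable (fun x => A x ξ) (volume.restrict Ω)
  bdd : ∃ C : ℝ, ∀ᵐ x ∂(volume.restrict Ω), ∀ ξ : Euc N, ‖A x ξ‖ ≤ C * ‖ξ‖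
  symm : ∀ x : Euc N, ∀ ξ η : Euc N, ⟪A x ξ, η⟫ = ⟪ξ, A x η⟫
  coer : ∀ᵐ x ∂(volume.restrict Ω), ∀ ξ : Euc N, α⁻¹ ^ 2 * ‖ξ‖ ^ 2 ≤ ⟪A x ξ, ξ⟫

/-- The weighted inner product `⟨v,w⟩_A = ∫_Ω A v · w dx`. -/
def ipA (Ω : Set (Euc N)) (A : Euc N → Euc N →L[ℝ] Euc N) (v w : Euc N → Euc N) : ℝ :=
  ∫ x in Ω, ⟪A x (v x), w x⟫

/-- The squared `A`-weighted norm `‖v‖²_A = ∫_Ω A v · v dx`. -/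
def sqA (Ω : Set (Euc N)) (A : Euc N → Euc N →L[ℝ] Euc N) (v : Euc N → Euc N) : ℝ :=
  ipA Ω A v v

/-- The `A`-weighted norm `‖v‖_A`. -/
def nrmA (Ω : Set (Euc N)) (A : Euc N → Euc N →L[ℝ] Euc N) (v : Euc N → Euc N) : ℝ :=
  Real.sqrt (sqA Ω A v)

/-- `w = A⁻¹ v` (a.e. on `Ω`), with `w ∈ L²(Ω;ℝ^N)`. -/
def IsAInv (Ω : Set (Euc N)) (A : Euc N → Euc N →L[ℝ] Euc N) (v w : Euc N → Euc N) : Prop :=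
  MemL2V Ω 0 w ∧ ∀ᵐ x ∂(volume.restrict Ω), A x (w x) = v x
theorem memL2V_memLp {Ω : Set (Euc N)} {v : Euc N → Euc N} (h : MemL2V Ω 0 v) :
    MemLp v 2 (volume.restrict Ω) := by
  refine (memLp_two_iff_integrable_sq_norm h.1).2 ?_
  simpa using h.2

theorem isTest_memLp {Ω : Set (Euc N)} {φ : Euc N → ℝ} (h : IsTest Ω φ) :
    MemLp (gradient φ) 2 (volume.restrict Ω) := by
  have hc : Continuous (gradient φ) :=
    (InnerProductSpace.toDual ℝ (Euc N)).symm.continuous.comp (h.1.continuous_fderiv (by simp))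
  have hs : HasCompactSupport (gradient φ) :=
    (h.2.1.fderiv (𝕜 := ℝ)).comp_left (g := (InnerProductSpace.toDual ℝ (Euc N)).symm) (map_zero _)
  exact (hc.memLp_of_hasCompactSupport hs).restrict Ω

theorem int_inner {Ω : Set (Euc N)} {a b : Euc N → Euc N}
    (ha : MemLp a 2 (volume.restrict Ω)) (hb : MemLp b 2 (volume.restrict Ω)) :
    Integrable (fun x => ⟪a x, b x⟫) (volume.restrict Ω) := by
  refine (MemLp.integrable_mul ha.norm hb.norm).mono (ha.1.inner hb.1) ?_
  filter_upwards with x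
  simpa using abs_real_inner_le_norm (a x) (b x)

theorem cs_inner {Ω : Set (Euc N)} {a b : Euc N → Euc N}
    (ha : MemLp a 2 (volume.restrict Ω)) (hb : MemLp b 2 (volume.restrict Ω)) :
    |∫ x in Ω, ⟪a x, b x⟫| ≤ nrmL2V Ω 0 a * nrmL2V Ω 0 b := by
  have h := integral_mul_norm_le_Lp_mul_Lq (μ := volume.restrict Ω) (f := a) (g := b)
    (p := 2) (q := 2) Real.HolderConjugate.two_two (by simpa using ha) (by simpa using hb)
  have h1 : |∫ x in Ω, ⟪a x, b x⟫| ≤ ∫ x in Ω, ‖a x‖ * ‖b x‖ := by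
    refine (abs_integral_le_integral_abs).trans ?_
    refine integral_mono (int_inner ha hb).abs (MemLp.integrable_mul ha.norm hb.norm) ?_
    exact fun x => abs_real_inner_le_norm (a x) (b x)
  refine h1.trans (h.trans (le_of_eq ?_))
  simp [nrmL2V, sqL2V, Real.sqrt_eq_rpow]

theorem orth {Ω : Set (Euc N)} {g v : Euc N → Euc N} (hg : MemG Ω g) (hv : MemD0 Ω v) :
    ∫ x in Ω, ⟪g x, v x⟫ = 0 := by
  obtain ⟨hg0, φ, hφ, hlim⟩ := hg
  have hgL := memL2V_memLp hg0
  have hvL := memL2V_memLp hv.1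
  have key : ∀ n, |∫ x in Ω, ⟪g x, v x⟫| ≤
      nrmL2V Ω 0 (fun x => g x - gradient (φ n) x) * nrmL2V Ω 0 v := by
    intro n
    have hp := isTest_memLp (hφ n)
    refine le_trans (le_of_eq ?_) (cs_inner (hgL.sub hp) hvL)
    congr 1
    have h0 : ∫ x in Ω, ⟪gradient (φ n) x, v x⟫ = 0 := by
      rw [← hv.2 _ (hφ n)]
      exact integral_congr_ae (.of_forall fun x => real_inner_comm _ _)
    simp only [inner_sub_left]
    rw [integral_sub (int_inner hgL hvL) (int_inner hp hvL), h0, sub_zero]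
  have h2 := hlim.mul_const (nrmL2V Ω 0 v)
  rw [zero_mul] at h2
  exact abs_nonpos_iff.1 (ge_of_tendsto' h2 key)

/-- Non-conforming minorant for the solenoidal part:
`‖A⁻¹ψ‖²_A ≥ ∫ (2∇u − A⁻¹(2ṽ + v))·v` for `v ∈ D₀` and `û − u ∈ H¹°₋₁(Ω)`. -/
theorem stmt_14 (Ω : Set (Euc N)) (hΩ : IsOpen Ω) (hN : 3 ≤ N) (M : Coeff N Ω)
    (f : Euc N → ℝ) (hf : MemL2 Ω 1 f)
    (uh : Euc N → ℝ) (gu : Euc N → Euc N)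
    (huh : MemL2 Ω (-1) uh) (hgu : MemL2V Ω 0 gu) (hguw : IsWeakGrad Ω uh gu)
    (hweak : ∀ φ : Euc N → ℝ, IsTest Ω φ →
      (∫ x in Ω, ⟪M.A x (gu x), gradient φ x⟫) = ∫ x in Ω, f x * φ x)
    (vt : Euc N → Euc N) (hvt : MemL2V Ω 0 vt)
    (wt : Euc N → Euc N) (hwt : IsAInv Ω M.A vt wt)
    (g ψ : Euc N → Euc N) (hg : MemG Ω g) (hψ : MemD0 Ω ψ)
    (hdec : ∀ᵐ x ∂(volume.restrict Ω), M.A x ((gu x - wt x) - g x) = ψ x) :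
    ∀ v : Euc N → Euc N, MemD0 Ω v → ∀ wv : Euc N → Euc N, IsAInv Ω M.A v wv →
    ∀ (u : Euc N → ℝ) (gu' : Euc N → Euc N),
      MemL2 Ω (-1) u → MemL2V Ω 0 gu' → IsWeakGrad Ω u gu' →
      MemH10 Ω (fun x => uh x - u x) (fun x => gu x - gu' x) →
      (∫ x in Ω, ⟪(2 : ℝ) • gu' x - ((2 : ℝ) • wt x + wv x), v x⟫) ≤
        sqA Ω M.A (fun x => (gu x - wt x) - g x) := by
  intro v hv wv hwv u gu' _ hgu' _ hH
  have o1 := orth hg hv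
  have o2 := orth ⟨hH.2.1, hH.2.2.2.choose, hH.2.2.2.choose_spec.1, hH.2.2.2.choose_spec.2.2⟩ hv
  have L1 := memL2V_memLp hg.1
  have L2 := memL2V_memLp hH.2.1
  have Lgu := memL2V_memLp hgu
  have Lgu' := memL2V_memLp hgu'
  have Lwt := memL2V_memLp hwt.1
  have Lwv := memL2V_memLp hwv.1
  have Lv := memL2V_memLp hv.1
  have Lψ := memL2V_memLp hψ.1
  have Le := (Lgu.sub Lwt).sub L1
  have I1 := int_inner L1 Lv
  have I2 := int_inner L2 Lv
  have I3 : Integrable (fun x => ⟪(2 : ℝ) • gu' x - ((2 : ℝ) • wt x + wv x), v x⟫)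
      (volume.restrict Ω) := int_inner ((Lgu'.const_smul (2:ℝ)).sub ((Lwt.const_smul (2:ℝ)).add Lwv)) Lv
  have I5 : Integrable (fun x => ⟪(2 : ℝ) • gu' x - ((2 : ℝ) • wt x + wv x), v x⟫
        + 2 * ⟪gu x - gu' x, v x⟫) (volume.restrict Ω) := I3.add (I2.const_mul 2)
  have I4 : Integrable (fun x => ⟪M.A x ((gu x - wt x) - g x), (gu x - wt x) - g x⟫)
      (volume.restrict Ω) := by
    refine (int_inner Lψ Le).congr ?_
    filter_upwards [hdec] with x hx
    rw [hx]; rfl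
  have e : (∫ x in Ω, ⟪(2 : ℝ) • gu' x - ((2 : ℝ) • wt x + wv x), v x⟫) =
      ∫ x in Ω, (⟪(2 : ℝ) • gu' x - ((2 : ℝ) • wt x + wv x), v x⟫
        + 2 * ⟪gu x - gu' x, v x⟫ - 2 * ⟪g x, v x⟫) := by
    rw [integral_sub I5 (I1.const_mul 2),
      integral_add I3 (I2.const_mul 2), integral_const_mul, integral_const_mul, o1, o2]
    simp
  rw [e]
  refine integral_mono_ae ((I3.add (I2.const_mul 2)).sub (I1.const_mul 2)) I4 ?_
  filter_upwards [hwv.2, M.coer] with x hx hc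
  have h1 := hc (((gu x - wt x) - g x) - wv x)
  have h2 : 0 ≤ M.α⁻¹ ^ 2 * ‖((gu x - wt x) - g x) - wv x‖ ^ 2 := by positivity
  have h3 := M.symm x ((gu x - wt x) - g x) (wv x)
  have h4 : ⟪M.A x (((gu x - wt x) - g x) - wv x), ((gu x - wt x) - g x) - wv x⟫ =
      ⟪M.A x ((gu x - wt x) - g x), (gu x - wt x) - g x⟫ - 2 * ⟪(gu x - wt x) - g x, v x⟫
        + ⟪wv x, v x⟫ := by
    generalize (gu x - wt x) - g x = e at h3 ⊢
    rw [map_sub, inner_sub_left, inner_sub_right, inner_sub_right, h3, hx,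
      real_inner_comm e (v x), real_inner_comm (wv x) (v x)]
    ring
  have h5 : ⟪(2 : ℝ) • gu' x - ((2 : ℝ) • wt x + wv x), v x⟫
        + 2 * ⟪gu x - gu' x, v x⟫ - 2 * ⟪g x, v x⟫ =
      2 * ⟪(gu x - wt x) - g x, v x⟫ - ⟪wv x, v x⟫ := by
    simp only [inner_sub_left, inner_add_left, real_inner_smul_left]
    ring
  show _ ≤ _
  linarith
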